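/- arXiv:2203.01872 — 10 statements merged into one kernel-verified Lean document; each statement's English description precedes it below -/
import Mathlib

section
/- Let n ≥ 1 and suppose each of n agents has a strict linear order ≻_i over a set of n items, and let s = ⌈√n⌉. Then there exists an assignment A from agents to items (not necessarily injective) such that: (i) for every item j, at most s agents are assigned to j by A; and (ii) for every matching X (bijection from agents to items), the number of agents i with X(i) ≻_i A(i) is at most s. That is, a sufficiently representative assignment always exists (it is produced by the ⌈√n⌉-Serial Dictatorship algorithm). -/
/-!
The assignment comes from serial dictatorship with capacity `s = ⌈√n⌉` per item: agents choose in
turn, each taking a favourite item among those chosen by fewer than `s` agents so far. An item that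
an agent `i` prefers to `A i` was already full when `i` chose, so in the end it has `s` agents
(`exists_capacitated_stable`). If `k` agents prefer a matching `X` to `A`, then the items `X i` of
these agents are `k` distinct full items, so `k * s ≤ n ≤ s * s` and hence `k ≤ s`.
-/

/-- Serial dictatorship restricted to the agents in `S`: every item has at most `s` agents, and an
item that some agent of `S` prefers to their own is full. -/
lemma exists_capacitated_stable {n : ℕ} (s : ℕ) (hs : 1 ≤ s)
    (pref : Fin n → Fin n → Fin n → Prop)
    (hpref : ∀ i, IsStrictTotalOrder (Fin n) (pref i)) (S : Finset (Fin n)) :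
    ∃ A : Fin n → Fin n,
      (∀ j, (S.filter (fun i => A i = j)).card ≤ s) ∧
      (∀ i ∈ S, ∀ j, pref i j (A i) → s ≤ (S.filter (fun i => A i = j)).card) := by
  classical
  induction S using Finset.induction_on with
  | empty => exact ⟨id, by simp, by simp⟩
  | insert a S ha ih =>
    obtain ⟨A, h1, h2⟩ := ih
    have hlt : S.card < n := by
      have := Finset.card_le_univ (insert a S)
      rw [Finset.card_insert_of_notMem ha, Fintype.card_fin] at this
      omega
    -- `S` has fewer than `n ≤ n * s` agents, so they cannot fill every item.
    have hne : {j | (S.filter (fun i => A i = j)).card < s}.Nonempty := by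
      by_contra hcon
      rw [Set.not_nonempty_iff_eq_empty, Set.eq_empty_iff_forall_notMem] at hcon
      have hsum : S.card = ∑ j, (S.filter (fun i => A i = j)).card :=
        Finset.card_eq_sum_card_fiberwise (fun _ _ => Finset.mem_coe.2 (Finset.mem_univ _))
      have hge : ∑ _j : Fin n, 1 ≤ ∑ j, (S.filter (fun i => A i = j)).card :=
        Finset.sum_le_sum fun j _ => hs.trans (not_lt.1 (hcon j))
      simp only [Finset.sum_const, Finset.card_univ, Fintype.card_fin, smul_eq_mul, mul_one] at hge
      omega
    haveI := hpref a
    have wf : WellFounded (pref a) := Finite.wellFounded_of_trans_of_irrefl _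
    obtain ⟨m, hm, hmin⟩ := wf.has_min _ hne
    have hcount : ∀ j, ((insert a S).filter (fun i => Function.update A a m i = j)).card =
        (S.filter (fun i => A i = j)).card + if m = j then 1 else 0 := by
      intro j
      have hS : S.filter (fun i => Function.update A a m i = j) = S.filter (fun i => A i = j) := by
        refine Finset.filter_congr fun i hi => ?_
        rw [Function.update_of_ne (ne_of_mem_of_not_mem hi ha)]
      rw [Finset.filter_insert, hS, Function.update_self]
      split_ifs with h
      · exact Finset.card_insert_of_notMem fun h' => ha (Finset.mem_filter.1 h').1
      · rfl
    refine ⟨Function.update A a m, fun j => ?_, fun i hi j hij => ?_⟩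
    · rw [hcount]
      split_ifs with h
      · subst h
        exact hm
      · exact h1 j
    · rw [hcount]
      refine le_trans ?_ (Nat.le_add_right _ _)
      rcases Finset.mem_insert.1 hi with rfl | hiS
      · rw [Function.update_self] at hij
        by_contra hcon
        exact hmin j (not_le.1 hcon) hij
      · rw [Function.update_of_ne (ne_of_mem_of_not_mem hiS ha)] at hij
        exact h2 i hiS j hij

/-- For n ≥ 1 agents with strict linear orders over n items,
with s = ⌈√n⌉, there exists a (many-to-one) assignment A of agents to items
such that every item receives at most s agents, and for every matching
(bijection) X, at most s agents strictly prefer X(i) to A(i). -/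
theorem sufficiently_representative_assignment_exists
    (n : ℕ) (hn : 1 ≤ n)
    (pref : Fin n → Fin n → Fin n → Prop)
    (hpref : ∀ i, IsStrictTotalOrder (Fin n) (pref i)) :
    ∃ A : Fin n → Fin n,
      (∀ j : Fin n, ({i | A i = j} : Set (Fin n)).ncard ≤ ⌈Real.sqrt n⌉₊) ∧
      (∀ X : Fin n ≃ Fin n,
        ({i | pref i (X i) (A i)} : Set (Fin n)).ncard ≤ ⌈Real.sqrt n⌉₊) := by
  classical
  have hs : 1 ≤ ⌈Real.sqrt n⌉₊ := Nat.ceil_pos.2 (Real.sqrt_pos.2 (by exact_mod_cast hn))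
  have hss : n ≤ ⌈Real.sqrt n⌉₊ * ⌈Real.sqrt n⌉₊ := by
    have h : (n : ℝ) ≤ (⌈Real.sqrt n⌉₊ : ℝ) ^ 2 := (Real.sqrt_le_left (by positivity)).1
      (Nat.le_ceil _)
    rw [← sq]
    exact_mod_cast h
  generalize ⌈Real.sqrt n⌉₊ = s at hs hss ⊢
  obtain ⟨A, h1, h2⟩ := exists_capacitated_stable s hs pref hpref Finset.univ
  refine ⟨A, fun j => ?_, fun X => ?_⟩
  · simpa [Set.ncard_eq_toFinset_card'] using h1 j
  · rw [Set.ncard_eq_toFinset_card', Set.toFinset_setOf]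
    set K := Finset.univ.filter (fun i => pref i (X i) (A i)) with hK
    let c : Fin n → ℕ := fun j => (Finset.univ.filter (fun i => A i = j)).card
    have hsum : ∑ j, c j = n := by
      have := Finset.card_eq_sum_card_fiberwise (s := (Finset.univ : Finset (Fin n)))
        (t := Finset.univ) (f := A) (fun _ _ => Finset.mem_coe.2 (Finset.mem_univ _))
      simpa using this.symm
    have hle : K.card * s ≤ s * s := calc
      K.card * s = ∑ _i ∈ K, s := by simp
      _ ≤ ∑ i ∈ K, c (X i) := Finset.sum_le_sum fun i hi =>
          h2 i (Finset.mem_univ i) (X i) (Finset.mem_filter.1 hi).2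
      _ ≤ ∑ i, c (X i) := Finset.sum_le_sum_of_subset (Finset.subset_univ K)
      _ = ∑ j, c j := Equiv.sum_comp X c
      _ = n := hsum
      _ ≤ s * s := hss
    exact Nat.le_of_mul_le_mul_right hle hs
end

section
/- Let N be a set of n agents, each with a strict linear order ≻_i over a finite set B of items, and let c ≥ 1 be an integer with c·|B| ≥ n. Then there exists an assignment A: N → B such that every item has at most c agents assigned to it, and for every injective map X: N → B, the number of agents i with X(i) ≻_i A(i) is at most ⌊n/c⌋. -/
/-!
Serial dictatorship with `c` copies of each item gives the assignment: agents are processed one at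
a time, each taking her favourite item among those taken fewer than `c` times. If an agent prefers
`b` to what she got, then `b` was already exhausted at her turn, hence stays exhausted
(`exists_greedy`). Each exhausted item uses up `c` agents, so there are at most `n / c` of them, and
an injective `X` sends the agents preferring `X i` to `A i` injectively into the exhausted items.
-/

/-- Outcome of serial dictatorship run on the agents of `S`: no item is used more than `c` times,
and every item some agent prefers to her own is used at least `c` times. -/
lemma exists_greedy {N B : Type*} [DecidableEq N] [Fintype B] [DecidableEq B]
    (pref : N → B → B → Prop) (hpref : ∀ i, IsStrictTotalOrder B (pref i))
    (c : ℕ) (A₀ : N → B) (S : Finset N) (hS : S.card ≤ c * Fintype.card B) :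
    ∃ A : N → B, (∀ j, (S.filter (A · = j)).card ≤ c) ∧
      ∀ i ∈ S, ∀ b, pref i b (A i) → c ≤ (S.filter (A · = b)).card := by
  induction S using Finset.induction_on with
  | empty => exact ⟨A₀, by simp, by simp⟩
  | insert a S ha ih =>
    rw [Finset.card_insert_of_notMem ha] at hS
    obtain ⟨A, hA, hfull⟩ := ih (by omega)
    have hex : ∃ b, (S.filter (A · = b)).card < c := by
      by_contra! h
      have hsum := Finset.card_eq_sum_card_fiberwise (s := S) (t := Finset.univ) (f := A)
        (fun _ _ => by simp)
      have hle := Finset.sum_le_sum (s := (Finset.univ : Finset B)) (fun b _ => h b)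
      simp only [Finset.sum_const, Finset.card_univ, smul_eq_mul] at hle
      rw [← hsum, mul_comm] at hle
      omega
    have := hpref a
    obtain ⟨m, hm, hmin⟩ := (Finite.wellFounded_of_trans_of_irrefl (pref a)).has_min
      {b | (S.filter (A · = b)).card < c} hex
    simp only [Set.mem_ofPred_eq] at hm hmin
    have hne : ∀ i ∈ S, i ≠ a := fun i hi h => ha (h ▸ hi)
    have hold : ∀ b, S.filter (Function.update A a m · = b) = S.filter (A · = b) := fun b =>
      Finset.filter_congr fun i hi => by simp [Function.update_of_ne (hne i hi)]
    have hmono : ∀ b, (S.filter (A · = b)).card ≤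
        ((insert a S).filter (Function.update A a m · = b)).card := fun b => by
      rw [← hold b]
      exact Finset.card_le_card (Finset.filter_subset_filter _ (Finset.subset_insert a S))
    refine ⟨Function.update A a m, fun j => ?_, fun i hi b hb => le_trans ?_ (hmono b)⟩
    · rw [Finset.filter_insert, hold, Function.update_self]
      split_ifs with h
      · subst h
        exact (Finset.card_insert_le _ _).trans hm
      · exact hA j
    · rcases Finset.mem_insert.mp hi with rfl | hi
      · rw [Function.update_self] at hb
        by_contra! h
        exact hmin b h hb
      · rw [Function.update_of_ne (hne i hi)] at hb
        exact hfull i hi b hb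

/-- n agents with strict linear orders over a finite set B of items,
and c ≥ 1 with c·|B| ≥ n.  There is an assignment A : agents → B with at most c
agents per item such that for every injective X, at most ⌊n/c⌋ agents strictly
prefer X(i) to A(i). -/
theorem serial_dictatorship_counting
    (n : ℕ) (B : Type*) [Fintype B]
    (pref : Fin n → B → B → Prop)
    (hpref : ∀ i, IsStrictTotalOrder B (pref i))
    (c : ℕ) (hc : 1 ≤ c) (hcb : n ≤ c * Fintype.card B) :
    ∃ A : Fin n → B,
      (∀ j : B, ({i | A i = j} : Set (Fin n)).ncard ≤ c) ∧
      (∀ X : Fin n → B, Function.Injective X →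
        ({i | pref i (X i) (A i)} : Set (Fin n)).ncard ≤ n / c) := by
  classical
  -- If `B` is empty then `n = 0`, so an arbitrary starting assignment always exists.
  have hA₀ : Nonempty (Fin n → B) := by
    rcases isEmpty_or_nonempty B with h | h
    · have hn : n = 0 := by simpa using hcb
      subst hn
      exact ⟨Fin.elim0⟩
    · infer_instance
  obtain ⟨A₀⟩ := hA₀
  obtain ⟨A, hA, hfull⟩ := exists_greedy pref hpref c A₀ Finset.univ (by simpa using hcb)
  refine ⟨A, fun j => ?_, fun X hX => ?_⟩
  · simpa [Set.ncard_eq_toFinset_card'] using hA j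
  · set F : Finset B :=
      Finset.univ.filter fun b => c ≤ (Finset.univ.filter (A · = b)).card with hF
    have hFn : F.card * c ≤ n := by
      calc F.card * c = ∑ _b ∈ F, c := by simp
        _ ≤ ∑ b ∈ F, (Finset.univ.filter (A · = b)).card :=
          Finset.sum_le_sum fun b hb => (Finset.mem_filter.mp hb).2
        _ ≤ ∑ b, (Finset.univ.filter (A · = b)).card :=
          Finset.sum_le_sum_of_subset (Finset.subset_univ F)
        _ = n := by
          have hsum := Finset.card_eq_sum_card_fiberwise (s := (Finset.univ : Finset (Fin n)))
            (t := Finset.univ) (f := A) (fun _ _ => by simp)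
          rw [Finset.card_fin] at hsum
          exact hsum.symm
    refine le_trans ?_ ((Nat.le_div_iff_mul_le hc).mpr hFn)
    rw [← Set.ncard_coe_finset F]
    refine Set.ncard_le_ncard_of_injOn X (fun i hi => ?_) hX.injOn
    simpa [hF] using hfull i (Finset.mem_univ i) (X i) hi
end

section
/- Let n ≥ 1, s = ⌈√n⌉, and let v: N × A → ℝ≥0 be nonnegative values of n agents for n items. For each agent i fix an item t_i with v(i, t_i) = max_{j∈A} v(i,j). Suppose A: N → A is an assignment such that (i) for every item j at most s agents are assigned to j, and (ii) for every matching X, at most s agents i satisfy v(i, X(i)) > v(i, A(i)). Define revealed values by r(i,j) = v(i,j) if j = t_i or j = A(i), and r(i,j) = 0 otherwise. Let Y be a matching maximizing the revealed welfare Σ_i r(i, Y(i)) over all matchings. Then for every matching X, Σ_i v(i, X(i)) ≤ (1 + 2s) · Σ_i r(i, Y(i)). In particular, since Σ_i v(i, Y(i)) ≥ Σ_i r(i, Y(i)), the social welfare of Y is within a factor 1 + 2⌈√n⌉ = O(√n) of the optimal social welfare, establishing that the Match-TwoQueries mechanism has distortion O(√n). -/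
/-! Let `R` be the revealed welfare of `Y` and `s = ⌈√n⌉`. A partial matching that uses only revealed
pairs extends to a full matching, and revealed values are nonnegative, so its welfare is at most `R`
(`sum_le_of_injOn`). For a matching `X`, an agent `i` either prefers `X i` to `A i`, or not.

* At most `s` agents are of the first kind, and each contributes at most `v i (t i) ≤ R`, since the
  single pair `(i, t i)` is a revealed partial matching.
* The agents of the second kind contribute at most `∑ i, v i (A i)`. Numbering the agents assigned to
  each item splits `A` into `s` partial matchings (`sum_le_mul_of_card_fiber_le`), so this is at
  most `s * R`.

In total the welfare of `X` is at most `2 * s * R ≤ (1 + 2 * s) * R`. -/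

/-- The welfare of a partial matching, given by `f` injective on the set `T` of matched agents, is at
most the maximal welfare of a full matching: extend it to a permutation. -/
lemma sum_le_of_injOn {n : ℕ} (r : Fin n → Fin n → ℝ) (hr : ∀ i j, 0 ≤ r i j) (R : ℝ)
    (hR : ∀ Z : Fin n ≃ Fin n, ∑ i, r i (Z i) ≤ R)
    (f : Fin n → Fin n) (T : Finset (Fin n)) (hf : Set.InjOn f T) :
    ∑ i ∈ T, r i (f i) ≤ R := by
  obtain ⟨Z, hZ⟩ := Finset.exists_equiv_extend_of_card_eq (t := Finset.univ) (by simp)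
    (Finset.subset_univ (T.image f)) hf
  let Z' : Fin n ≃ Fin n := Z.trans (Equiv.subtypeUnivEquiv (fun x => Finset.mem_univ x))
  calc ∑ i ∈ T, r i (f i) = ∑ i ∈ T, r i (Z' i) :=
        Finset.sum_congr rfl fun i hi => congrArg (r i) (hZ i hi).symm
    _ ≤ ∑ i, r i (Z' i) :=
        Finset.sum_le_sum_of_subset_of_nonneg (Finset.subset_univ _) fun i _ _ => hr i _
    _ ≤ R := hR Z'

/-- If every fiber of `f` has at most `s` elements, then the agents split into `s` classes on each of
which `f` is injective, so a bound `R` on every injective part gives the bound `s * R` on the whole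
sum. -/
lemma sum_le_mul_of_card_fiber_le {n : ℕ} (w : Fin n → ℝ) (f : Fin n → Fin n) (s : ℕ) (R : ℝ)
    (hs : ∀ j, (Finset.univ.filter fun i => f i = j).card ≤ s)
    (hR : ∀ T : Finset (Fin n), Set.InjOn f T → ∑ i ∈ T, w i ≤ R) :
    ∑ i, w i ≤ s * R := by
  -- the position of `i` within its fiber
  let rank : Fin n → ℕ := fun i => (Finset.univ.filter fun k => f k = f i ∧ k < i).card
  have rank_lt : ∀ i k, f i = f k → i < k → rank i < rank k := by
    intro i k h hik
    apply Finset.card_lt_card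
    rw [Finset.ssubset_iff_of_subset]
    · exact ⟨i, by simp [h, hik], by simp⟩
    · intro l hl
      simp only [Finset.mem_filter, Finset.mem_univ, true_and] at hl ⊢
      exact ⟨hl.1.trans h, hl.2.trans hik⟩
  have rank_mem : ∀ i ∈ Finset.univ, rank i ∈ Finset.range s := by
    intro i _
    rw [Finset.mem_range]
    refine lt_of_lt_of_le (Finset.card_lt_card ?_) (hs (f i))
    rw [Finset.ssubset_iff_of_subset]
    · exact ⟨i, by simp, by simp⟩
    · intro l hl
      simp only [Finset.mem_filter, Finset.mem_univ, true_and] at hl ⊢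
      exact hl.1
  rw [← Finset.sum_fiberwise_of_maps_to rank_mem]
  calc _ ≤ ∑ _k ∈ Finset.range s, R := by
        refine Finset.sum_le_sum fun k _ => hR _ ?_
        intro a ha b hb hab
        simp only [Finset.coe_filter, Finset.mem_univ, true_and, Set.mem_ofPred_eq] at ha hb
        rcases lt_trichotomy a b with h | h | h
        · have := rank_lt a b hab h
          omega
        · exact h
        · have := rank_lt b a hab.symm h
          omega
    _ = s * R := by simp

/-- Distortion guarantee of Match-TwoQueries for One-Sided Matching:
given a sufficiently representative assignment A (with parameter s = ⌈√n⌉) and the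
revealed values r (value at the favorite item t_i and at A(i), zero elsewhere),
any matching Y maximizing the revealed welfare satisfies
SW(X) ≤ (1 + 2s)·SW_R(Y) for every matching X. -/
theorem match_two_queries_distortion
    (n : ℕ) (hn : 1 ≤ n)
    (v : Fin n → Fin n → ℝ) (hv : ∀ i j, 0 ≤ v i j)
    (t : Fin n → Fin n) (ht : ∀ i j, v i j ≤ v i (t i))
    (A : Fin n → Fin n)
    (hA1 : ∀ j : Fin n, ({i | A i = j} : Set (Fin n)).ncard ≤ ⌈Real.sqrt n⌉₊)
    (hA2 : ∀ X : Fin n ≃ Fin n,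
      ({i | v i (A i) < v i (X i)} : Set (Fin n)).ncard ≤ ⌈Real.sqrt n⌉₊)
    (r : Fin n → Fin n → ℝ)
    (hr : ∀ i j, r i j = if j = t i ∨ j = A i then v i j else 0)
    (Y : Fin n ≃ Fin n)
    (hY : ∀ Z : Fin n ≃ Fin n, ∑ i, r i (Z i) ≤ ∑ i, r i (Y i)) :
    ∀ X : Fin n ≃ Fin n,
      ∑ i, v i (X i) ≤ (1 + 2 * (⌈Real.sqrt n⌉₊ : ℝ)) * ∑ i, r i (Y i) := by
  intro X
  set s := ⌈Real.sqrt n⌉₊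
  set R := ∑ i, r i (Y i)
  have hr0 : ∀ i j, 0 ≤ r i j := by
    intro i j
    rw [hr]
    split_ifs
    exacts [hv i j, le_rfl]
  have hR0 : 0 ≤ R := Finset.sum_nonneg fun i _ => hr0 i _
  have hrA : ∀ i, r i (A i) = v i (A i) := fun i => by simp [hr]
  have hrt : ∀ i, r i (t i) = v i (t i) := fun i => by simp [hr]
  have hone : ∀ i, v i (t i) ≤ R := by
    intro i
    simpa [hrt] using sum_le_of_injOn r hr0 R hY t {i} (by simp)
  have hall : ∑ i, v i (A i) ≤ s * R := by
    refine sum_le_mul_of_card_fiber_le _ A s R (fun j => ?_) fun T hT => ?_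
    · simpa [Set.ncard_eq_toFinset_card'] using hA1 j
    · simpa only [hrA] using sum_le_of_injOn r hr0 R hY A T hT
  have hcard : ((Finset.univ.filter fun i => v i (A i) < v i (X i)).card : ℝ) ≤ s := by
    have h := hA2 X
    rw [Set.ncard_eq_toFinset_card', Set.toFinset_ofPred] at h
    exact_mod_cast h
  have hpt : ∀ i, v i (X i) ≤ v i (A i) + if v i (A i) < v i (X i) then R else 0 := by
    intro i
    split_ifs with h
    · linarith [ht i (X i), hone i, hv i (A i)]
    · linarith
  calc ∑ i, v i (X i)
      ≤ ∑ i, (v i (A i) + if v i (A i) < v i (X i) then R else 0) :=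
        Finset.sum_le_sum fun i _ => hpt i
    _ = ∑ i, v i (A i) + (Finset.univ.filter fun i => v i (A i) < v i (X i)).card * R := by
        rw [Finset.sum_add_distrib, ← Finset.sum_filter, Finset.sum_const, nsmul_eq_mul]
    _ ≤ s * R + s * R := add_le_add hall (mul_le_mul_of_nonneg_right hcard hR0)
    _ ≤ (1 + 2 * (s : ℝ)) * R := by linarith
end

section
/- Let N be a set of n ≥ 1 agents, let N1, N2 ⊆ N, let k ≥ 1 be an integer, and set s = ⌈√n⌉. Assume |N1| ≤ s·|N2|, and suppose each agent i ∈ N1 has a strict linear order ≻_i over N2. Then there exists an assignment A: N1 → N2 such that: (i) for every j ∈ N2, at most s agents of N1 are assigned to j; and (ii) for every set of pairs E ⊆ N1 × N2 in which every element of N1 occurs as first coordinate in at most k pairs and every element of N2 occurs as second coordinate in at most k pairs, the number of agents i ∈ N1 for which there exists some j with (i,j) ∈ E and j ≻_i A(i) is at most k·s. -/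
/-!
Let `s = ⌈√n⌉`. Serial dictatorship with capacity `s` lets the agents of `N1` choose one after
another, each taking a most preferred element of `N2` among those chosen fewer than `s` times so
far; the bound `|N1| ≤ s * |N2|` guarantees that such an element is available. Loads never
decrease, so an agent can only envy an element whose final load is `s`
(`exists_serialDictatorship`). There are at most `|N1| / s ≤ n / s ≤ s` such saturated elements,
and in a graph of degree at most `k` each of them is adjacent to at most `k` agents, so at most
`k * s` agents strictly prefer a neighbour to their assigned element.
-/

/-- A relation that is irreflexive and transitive on `U` has a maximal element in every nonempty
subset `T` of `U`. -/
lemma exists_undominated {α : Type*} {r : α → α → Prop} {U : Finset α}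
    (hirr : ∀ a ∈ U, ¬ r a a)
    (htrans : ∀ a ∈ U, ∀ b ∈ U, ∀ c ∈ U, r a b → r b c → r a c)
    {T : Finset α} (hT : T.Nonempty) (hTU : T ⊆ U) :
    ∃ m ∈ T, ∀ j ∈ T, ¬ r j m := by
  classical
  induction hT using Finset.Nonempty.cons_induction with
  | singleton a => exact ⟨a, by simp, by simpa using hirr a (hTU (by simp))⟩
  | cons b T hb hT ih =>
    have hbU : b ∈ U := hTU (by simp)
    have hT' : T ⊆ U := fun x hx => hTU (by simp [hx])
    obtain ⟨m, hm, hmax⟩ := ih hT'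
    by_cases hbm : r b m
    · refine ⟨b, by simp, fun j hj hjb => ?_⟩
      rcases Finset.mem_cons.1 hj with rfl | hj
      · exact hirr j hbU hjb
      · exact hmax j hj (htrans j (hT' hj) b hbU m (hT' hm) hjb hbm)
    · refine ⟨m, by simp [hm], fun j hj => ?_⟩
      rcases Finset.mem_cons.1 hj with rfl | hj
      · exact hbm
      · exact hmax j hj

/-- The outcome of serial dictatorship with capacity `s` for the agents in `S`: the capacities are
respected, and every element that an agent prefers to its own is filled to capacity. -/
lemma exists_serialDictatorship {α : Type*} [DecidableEq α] (s : ℕ) (N2 : Finset α)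
    (pref : α → α → α → Prop) (S : Finset α)
    (hcard : S.card ≤ s * N2.card)
    (hirr : ∀ i ∈ S, ∀ a ∈ N2, ¬ pref i a a)
    (htrans : ∀ i ∈ S, ∀ a ∈ N2, ∀ b ∈ N2, ∀ c ∈ N2,
      pref i a b → pref i b c → pref i a c) :
    ∃ A : α → α, (∀ i ∈ S, A i ∈ N2) ∧
      (∀ j, (S.filter (fun i => A i = j)).card ≤ s) ∧
      ∀ i ∈ S, ∀ j ∈ N2, pref i j (A i) → s ≤ (S.filter (fun i => A i = j)).card := by
  induction S using Finset.induction_on with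
  | empty => exact ⟨id, by simp, by simp, by simp⟩
  | insert a S ha ih =>
    rw [Finset.card_insert_of_notMem ha] at hcard
    obtain ⟨A, hA, hcap, hfull⟩ := ih (by omega)
      (fun i hi => hirr i (Finset.mem_insert_of_mem hi))
      (fun i hi => htrans i (Finset.mem_insert_of_mem hi))
    set T := N2.filter (fun j => (S.filter (fun i => A i = j)).card < s) with hTdef
    have hT : T.Nonempty := by
      by_contra hne
      have hall : ∀ j ∈ N2, s ≤ (S.filter (fun i => A i = j)).card := by
        intro j hj
        by_contra hlt
        exact hne ⟨j, Finset.mem_filter.2 ⟨hj, by omega⟩⟩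
      have h1 := Finset.card_eq_sum_card_fiberwise (f := A) (s := S) (t := N2) hA
      have h2 := Finset.card_nsmul_le_sum N2 _ s hall
      rw [smul_eq_mul, mul_comm] at h2
      omega
    obtain ⟨m, hm, hmax⟩ := exists_undominated (hirr a (by simp)) (htrans a (by simp)) hT
      (Finset.filter_subset _ _)
    obtain ⟨hm2, hms⟩ := Finset.mem_filter.1 hm
    have hold : ∀ i ∈ S, Function.update A a m i = A i := fun i hi =>
      Function.update_of_ne (fun h : i = a => ha (h ▸ hi)) _ _
    have hfil : ∀ j, S.filter (fun i => Function.update A a m i = j)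
        = S.filter (fun i => A i = j) := fun j =>
      Finset.filter_congr fun i hi => by rw [hold i hi]
    have hmono : ∀ j, (S.filter (fun i => A i = j)).card ≤
        ((insert a S).filter (fun i => Function.update A a m i = j)).card := fun j => by
      rw [← hfil j]
      exact Finset.card_le_card (Finset.filter_subset_filter _ (Finset.subset_insert _ _))
    refine ⟨Function.update A a m, ?_, ?_, ?_⟩
    · intro i hi
      rcases Finset.mem_insert.1 hi with rfl | hi
      · simpa using hm2
      · rw [hold i hi]; exact hA i hi
    · intro j
      rw [Finset.filter_insert, hfil j, Function.update_self]
      split_ifs with h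
      · subst h
        exact (Finset.card_insert_le _ _).trans hms
      · exact hcap j
    · intro i hi j hj hp
      refine le_trans ?_ (hmono j)
      rcases Finset.mem_insert.1 hi with rfl | hi
      · rw [Function.update_self] at hp
        by_contra hlt
        exact hmax j (Finset.mem_filter.2 ⟨hj, by omega⟩) hp
      · rw [hold i hi] at hp
        exact hfull i hi j hj hp

/-- Existence of an (N1, N2, k)-sufficiently representative assignment.
With s = ⌈√n⌉ and |N1| ≤ s·|N2|, there is an assignment A : N1 → N2 with at most s
agents of N1 per element of N2, and for every "bipartite graph" E ⊆ N1 × N2 of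
maximum degree at most k on each side, at most k·s agents of N1 strictly prefer
some E-neighbor to their assigned agent. -/
theorem general_sufficiently_representative_assignment_exists
    (n : ℕ) (hn : 1 ≤ n) (k : ℕ) (hk : 1 ≤ k)
    (N1 N2 : Finset (Fin n))
    (hcard : N1.card ≤ ⌈Real.sqrt n⌉₊ * N2.card)
    (pref : Fin n → Fin n → Fin n → Prop)
    (hirr : ∀ i ∈ N1, ∀ a ∈ N2, ¬ pref i a a)
    (htrans : ∀ i ∈ N1, ∀ a ∈ N2, ∀ b ∈ N2, ∀ c ∈ N2,
      pref i a b → pref i b c → pref i a c)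
    (htotal : ∀ i ∈ N1, ∀ a ∈ N2, ∀ b ∈ N2, a ≠ b → pref i a b ∨ pref i b a) :
    ∃ A : Fin n → Fin n,
      (∀ i ∈ N1, A i ∈ N2) ∧
      (∀ j : Fin n, ({i | i ∈ N1 ∧ A i = j} : Set (Fin n)).ncard ≤ ⌈Real.sqrt n⌉₊) ∧
      (∀ E : Finset (Fin n × Fin n),
        (∀ p ∈ E, p.1 ∈ N1 ∧ p.2 ∈ N2) →
        (∀ i : Fin n, (E.filter (fun p => p.1 = i)).card ≤ k) →
        (∀ j : Fin n, (E.filter (fun p => p.2 = j)).card ≤ k) →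
        ({i | i ∈ N1 ∧ ∃ j, (i, j) ∈ E ∧ pref i j (A i)} : Set (Fin n)).ncard
          ≤ k * ⌈Real.sqrt n⌉₊) := by
  classical
  set s := ⌈Real.sqrt n⌉₊ with hs
  have hsq : n ≤ s * s := by
    have h1 : Real.sqrt n ≤ s := Nat.le_ceil _
    have h2 : (n : ℝ) ≤ s * s := by
      nlinarith [Real.mul_self_sqrt (Nat.cast_nonneg (α := ℝ) n), Real.sqrt_nonneg (n : ℝ)]
    exact_mod_cast h2
  have hspos : 0 < s := by
    rcases Nat.eq_zero_or_pos s with h | h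
    · rw [h] at hsq; omega
    · exact h
  obtain ⟨A, hA, hcap, hfull⟩ := exists_serialDictatorship s N2 pref N1 hcard hirr htrans
  refine ⟨A, hA, fun j => ?_, fun E hE _ hE2 => ?_⟩
  · have h : ({i | i ∈ N1 ∧ A i = j} : Set (Fin n)) = ↑(N1.filter (fun i => A i = j)) := by
      ext; simp
    rw [h, Set.ncard_coe_finset]
    exact hcap j
  · -- `F` is the set of saturated elements; counting assigned agents gives `s * |F| ≤ n ≤ s * s`.
    set F := N2.filter (fun j => s ≤ (N1.filter (fun i => A i = j)).card) with hF
    have hFs : F.card ≤ s := by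
      have h1 := Finset.card_eq_sum_card_fiberwise (f := A) (s := N1) (t := N2) hA
      have h2 := Finset.card_nsmul_le_sum F (fun j => (N1.filter (fun i => A i = j)).card) s
        (fun j hj => (Finset.mem_filter.1 hj).2)
      have h3 : ∑ j ∈ F, (N1.filter (fun i => A i = j)).card
          ≤ ∑ j ∈ N2, (N1.filter (fun i => A i = j)).card :=
        Finset.sum_le_sum_of_subset (Finset.filter_subset _ _)
      have h4 : N1.card ≤ n := by simpa using Finset.card_le_univ N1
      rw [smul_eq_mul] at h2
      exact Nat.le_of_mul_le_mul_right (by omega : F.card * s ≤ s * s) hspos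
    have hsub : ({i | i ∈ N1 ∧ ∃ j, (i, j) ∈ E ∧ pref i j (A i)} : Set (Fin n)) ⊆
        ↑(F.biUnion fun j => (E.filter (fun p => p.2 = j)).image Prod.fst) := by
      rintro i ⟨hi, j, hij, hp⟩
      have hj : j ∈ N2 := (hE _ hij).2
      rw [Finset.mem_coe, Finset.mem_biUnion]
      exact ⟨j, Finset.mem_filter.2 ⟨hj, hfull i hi j hj hp⟩,
        Finset.mem_image.2 ⟨(i, j), Finset.mem_filter.2 ⟨hij, rfl⟩, rfl⟩⟩
    calc _ ≤ _ := Set.ncard_le_ncard hsub (Finset.finite_toSet _)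
      _ = _ := Set.ncard_coe_finset _
      _ ≤ F.card * k := Finset.card_biUnion_le_card_mul _ _ _
        fun j _ => Finset.card_image_le.trans (hE2 j)
      _ ≤ s * k := Nat.mul_le_mul_right k hFs
      _ = k * s := mul_comm _ _
end

section
/- Let k ≥ 1, let N be a set of n vertices with n ≥ 3k, let N1, N2 ⊆ N, and set s = ⌈√n⌉. Let G be a graph on N whose edge set contains all pairs {i,j} with i ∈ N1, j ∈ N2, i ≠ j. For each ordered pair of distinct vertices let v_i(j) ≥ 0 be given, with v_i(j) = 0 unless i ∈ N1 and j ∈ N2; the weight of an edge {i,j} of G is w({i,j}) = v_i(j) + v_j(i). Let F be a matching extending k-family of subgraphs of G. For each i ∈ N1 fix t_i ∈ N2 \ {i} with v_i(t_i) = max_{j ∈ N2\{i\}} v_i(j), and let A: N1 → N2 be an assignment with A(i) ≠ i such that: (i) for every j ∈ N2 at most s agents of N1 are assigned to j; and (ii) for every set of pairs E ⊆ N1 × N2 in which every element of N1 occurs as first coordinate in at most k pairs and every element of N2 occurs as second coordinate in at most k pairs, at most k·s agents i ∈ N1 have some j with (i,j) ∈ E and v_i(j) > v_i(A(i)). Define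 the revealed pairs R = {(i,j) : i ∈ N1 and j ∈ {t_i, A(i)}}, and the revealed weight of an edge {i,j} as w_R({i,j}) = v_i(j)·1[(i,j) ∈ R] + v_j(i)·1[(j,i) ∈ R]; for a subgraph H let w_R(H) = Σ_{e ∈ E(H)} w_R(e) and w(H) = Σ_{e ∈ E(H)} w(e). If Y ∈ F maximizes w_R over F, then for every X ∈ F, w(X) ≤ (1 + 10·k²·s) · w_R(Y). In particular the General-TwoQueries mechanism has distortion O(√n) for Ordinal-k-Max-on-Graphs. -/
/-!
Write `W` for the maximum revealed weight `∑ e ∈ Y, wR e`, `s = ⌈√n⌉` and `m = ⌊n / (3k)⌋ ≥ 1`.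
A matching of at most `m` edges extends to a member of the family, so its revealed weight is at
most `W`. Two consequences carry the proof.

* The single edge `{i, t i}` is a matching, so `v i (t i) ≤ W` for every `i ∈ N1`.
* The edges `{i, A i}`, `i ∈ N1`, form a graph in which each edge meets at most `2s + 1` of them,
  itself included.
  Greedily picking a heaviest remaining edge `m` times (`exists_greedy_independent`) gives a matching
  showing `∑ i ∈ N1, v i (A i) ≤ (2s + 1 + n / m) W ≤ 9ksW`, as `n ≤ 6km`.

An edge set `X` of maximum degree at most `k` yields at most `k` pairs `(i, j)` for each `i`. If no
such pair has `v i j > v i (A i)`, these pairs contribute at most `k * v i (A i)`; otherwise they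
contribute at most `k * v i (t i) ≤ k * W`, and by representativeness this happens for at most `k * s`
agents. In total `w(X) ≤ k * 9ksW + k * ks * W = 10k²sW`.
-/

/-- Greedy selection: if each element of `S` conflicts with at most `D` elements of `S`
(counting itself), at most `m` pairwise non-conflicting elements `M` of `S` can be chosen so that `a(S) ≤ D * a(M) + |S| * c`
for some `c` with `m * c ≤ a(M)`. Here `c` bounds the elements left over once `m` picks are
made; the bound `c ≤ b` keeps it below every earlier pick in the induction. -/
theorem exists_greedy_independent {α : Type*} [DecidableEq α] (r : α → α → Prop)
    (hsymm : ∀ i j, r i j → r j i) (hrefl : ∀ i, r i i) [DecidableRel r]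
    (a : α → ℝ) (ha : ∀ i, 0 ≤ a i) (D : ℕ) (m : ℕ) :
    ∀ (S : Finset α) (b : ℝ), (∀ i ∈ S, (S.filter (r i)).card ≤ D) → 0 ≤ b →
      (∀ i ∈ S, a i ≤ b) →
      ∃ (M : Finset α) (c : ℝ), M ⊆ S ∧ M.card ≤ m ∧ (∀ i ∈ M, ∀ j ∈ M, i ≠ j → ¬ r i j) ∧
        0 ≤ c ∧ c ≤ b ∧ (m : ℝ) * c ≤ ∑ i ∈ M, a i ∧
        ∑ i ∈ S, a i ≤ D * ∑ i ∈ M, a i + S.card * c := by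
  induction m with
  | zero =>
    intro S b _ hb hab
    refine ⟨∅, b, by simp, by simp, by simp, hb, le_rfl, by simp, ?_⟩
    simpa using Finset.sum_le_card_nsmul S a b hab
  | succ m ih =>
    intro S b hD hb hab
    rcases S.eq_empty_or_nonempty with rfl | hne
    · exact ⟨∅, 0, by simp, by simp, by simp, le_rfl, hb, by simp, by simp⟩
    obtain ⟨i, hi, himax⟩ := S.exists_max_image a hne
    have hsub : S.filter (fun j => ¬ r i j) ⊆ S := Finset.filter_subset _ _
    obtain ⟨M, c, hMS, hMc, hMi, hc0, hcb, hmc, hsum⟩ := ih (S.filter (fun j => ¬ r i j)) (a i)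
      (fun j hj => (Finset.card_le_card (Finset.filter_subset_filter _ hsub)).trans
        (hD j (hsub hj))) (ha i) (fun j hj => himax j (hsub hj))
    have hiM : i ∉ M := fun h => (Finset.mem_filter.1 (hMS h)).2 (hrefl i)
    refine ⟨insert i M, c, ?_, ?_, ?_, hc0, hcb.trans (hab i hi), ?_, ?_⟩
    · exact Finset.insert_subset hi (hMS.trans hsub)
    · rw [Finset.card_insert_of_notMem hiM]; omega
    · intro x hx y hy hxy hr
      rcases Finset.mem_insert.1 hx with rfl | hxM
      · rcases Finset.mem_insert.1 hy with rfl | hyM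
        · exact hxy rfl
        · exact (Finset.mem_filter.1 (hMS hyM)).2 hr
      · rcases Finset.mem_insert.1 hy with rfl | hyM
        · exact (Finset.mem_filter.1 (hMS hxM)).2 (hsymm _ _ hr)
        · exact hMi x hxM y hyM hxy hr
    · rw [Finset.sum_insert hiM]; push_cast; linarith
    · rw [Finset.sum_insert hiM, ← Finset.sum_filter_add_sum_filter_not S (r i)]
      have h1 : ∑ x ∈ S.filter (r i), a x ≤ D * a i := by
        have h := Finset.sum_le_card_nsmul (S.filter (r i)) a (a i)
          (fun j hj => himax j (Finset.mem_filter.1 hj).1)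
        rw [nsmul_eq_mul] at h
        exact h.trans (mul_le_mul_of_nonneg_right (by exact_mod_cast hD i hi) (ha i))
      have h2 : ((S.filter (fun j => ¬ r i j)).card : ℝ) * c ≤ S.card * c :=
        mul_le_mul_of_nonneg_right (by exact_mod_cast Finset.card_le_card hsub) hc0
      linarith

/-- Summing a symmetrized weight over loopless edges is bounded by the sum over ordered pairs
(in fact the two agree). -/
theorem sum_edges_le_sum_pairs {α : Type*} [Fintype α] [DecidableEq α]
    (X : Finset (Sym2 α)) (hX : ∀ e ∈ X, ¬ e.IsDiag)
    (v : α → α → ℝ) (hv : ∀ i j, 0 ≤ v i j)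
    (w : Sym2 α → ℝ) (hw : ∀ i j, w s(i, j) = v i j + v j i) :
    ∑ e ∈ X, w e ≤ ∑ i, ∑ j ∈ Finset.univ.filter (fun j => s(i, j) ∈ X), v i j := by
  have h1 : ∑ i, ∑ j ∈ Finset.univ.filter (fun j => s(i, j) ∈ X), v i j
      = ∑ p ∈ (Finset.univ : Finset (α × α)).filter (fun p => s(p.1, p.2) ∈ X), v p.1 p.2 := by
    simp only [Finset.sum_filter]
    rw [← Finset.univ_product_univ, Finset.sum_product]
  rw [h1, ← Finset.sum_fiberwise_of_maps_to (t := X) (g := fun p : α × α => s(p.1, p.2))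
    (fun p hp => (Finset.mem_filter.1 hp).2)]
  refine Finset.sum_le_sum fun e he => ?_
  induction e using Sym2.inductionOn with
  | _ i j =>
    have hij : i ≠ j := fun h => hX _ he (by simpa using h)
    have hne : ((i, j) : α × α) ≠ (j, i) := fun h => hij (Prod.ext_iff.1 h).1
    rw [hw, ← Finset.sum_pair (f := fun p : α × α => v p.1 p.2) hne]
    refine Finset.sum_le_sum_of_subset_of_nonneg ?_ (fun p _ _ => hv _ _)
    intro p hp
    rcases Finset.mem_insert.1 hp with rfl | hp
    · simpa using he
    · rw [Finset.mem_singleton] at hp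
      subst hp
      simpa [Sym2.eq_swap] using he

/-- Distortion guarantee of General-TwoQueries for
Ordinal-k-Max-on-Graphs.  Given a matching extending k-family F of subgraphs
(modelled as finsets of edges) of G, favorite alternatives t_i, an
(N1, N2, k)-sufficiently representative assignment A (with s = ⌈√n⌉) and
revealed weights w_R, if Y ∈ F maximizes the revealed weight, then
w(X) ≤ (1 + 10k²s)·w_R(Y) for every X ∈ F. -/
theorem general_two_queries_distortion
    (k n : ℕ) (hk : 1 ≤ k) (hn : 3 * k ≤ n)
    (N1 N2 : Finset (Fin n))
    (G : SimpleGraph (Fin n))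
    (hG : ∀ i ∈ N1, ∀ j ∈ N2, i ≠ j → G.Adj i j)
    (v : Fin n → Fin n → ℝ)
    (hv0 : ∀ i j, 0 ≤ v i j)
    (hvz : ∀ i j, ¬(i ∈ N1 ∧ j ∈ N2) → v i j = 0)
    (w : Sym2 (Fin n) → ℝ)
    (hw : ∀ i j : Fin n, w s(i, j) = v i j + v j i)
    (F : Set (Finset (Sym2 (Fin n))))
    (hFsub : ∀ H ∈ F, ∀ e ∈ H, e ∈ G.edgeSet)
    (hFdeg : ∀ H ∈ F, ∀ x : Fin n, ({e | e ∈ H ∧ x ∈ e} : Set (Sym2 (Fin n))).ncard ≤ k)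
    (hFext : ∀ M : Finset (Sym2 (Fin n)),
      (∀ e ∈ M, e ∈ G.edgeSet) →
      (∀ e ∈ M, ∀ f ∈ M, e ≠ f → ∀ x : Fin n, x ∈ e → x ∉ f) →
      M.card ≤ n / (3 * k) → ∃ H ∈ F, M ⊆ H)
    (t : Fin n → Fin n)
    (ht : ∀ i ∈ N1, t i ∈ N2 ∧ t i ≠ i ∧ ∀ j ∈ N2, j ≠ i → v i j ≤ v i (t i))
    (A : Fin n → Fin n)
    (hA : ∀ i ∈ N1, A i ∈ N2 ∧ A i ≠ i)
    (hA1 : ∀ j : Fin n,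
      ({i | i ∈ N1 ∧ A i = j} : Set (Fin n)).ncard ≤ ⌈Real.sqrt n⌉₊)
    (hA2 : ∀ E : Finset (Fin n × Fin n),
      (∀ p ∈ E, p.1 ∈ N1 ∧ p.2 ∈ N2) →
      (∀ i : Fin n, (E.filter (fun p => p.1 = i)).card ≤ k) →
      (∀ j : Fin n, (E.filter (fun p => p.2 = j)).card ≤ k) →
      ({i | i ∈ N1 ∧ ∃ j, (i, j) ∈ E ∧ v i (A i) < v i j} : Set (Fin n)).ncard
        ≤ k * ⌈Real.sqrt n⌉₊)
    (wR : Sym2 (Fin n) → ℝ)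
    (hwR : ∀ i j : Fin n, wR s(i, j) =
      (if i ∈ N1 ∧ (j = t i ∨ j = A i) then v i j else 0) +
      (if j ∈ N1 ∧ (i = t j ∨ i = A j) then v j i else 0))
    (Y : Finset (Sym2 (Fin n))) (hY : Y ∈ F)
    (hYmax : ∀ H ∈ F, ∑ e ∈ H, wR e ≤ ∑ e ∈ Y, wR e) :
    ∀ X ∈ F, ∑ e ∈ X, w e
      ≤ (1 + 10 * (k : ℝ) ^ 2 * (⌈Real.sqrt n⌉₊ : ℝ)) * ∑ e ∈ Y, wR e := by
  classical
  intro X hX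
  set s : ℕ := ⌈Real.sqrt n⌉₊ with hs
  set W : ℝ := ∑ e ∈ Y, wR e with hWdef
  have hwR0 : ∀ e, 0 ≤ wR e := by
    intro e
    induction e using Sym2.inductionOn with
    | _ i j =>
      rw [hwR]
      have h1 := hv0 i j
      have h2 := hv0 j i
      split_ifs <;> linarith
  have hW0 : 0 ≤ W := Finset.sum_nonneg fun e _ => hwR0 e
  have hm1 : 1 ≤ n / (3 * k) := by
    rw [Nat.le_div_iff_mul_le (by omega)]; omega
  have hs1 : 1 ≤ s := by
    rw [hs, Nat.one_le_ceil_iff, Real.sqrt_pos]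
    have : 0 < n := by omega
    exact_mod_cast this
  -- A small matching extends to a member of `F`, whose revealed weight is at most `W`.
  have hmatch : ∀ M : Finset (Sym2 (Fin n)), (∀ e ∈ M, e ∈ G.edgeSet) →
      (∀ e ∈ M, ∀ f ∈ M, e ≠ f → ∀ x : Fin n, x ∈ e → x ∉ f) →
      M.card ≤ n / (3 * k) → ∑ e ∈ M, wR e ≤ W := by
    intro M h1 h2 h3
    obtain ⟨H, hH, hMH⟩ := hFext M h1 h2 h3
    exact (Finset.sum_le_sum_of_subset_of_nonneg hMH fun e _ _ => hwR0 e).trans (hYmax H hH)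
  have hrev : ∀ i ∈ N1, ∀ j, (j = t i ∨ j = A i) → v i j ≤ wR s(i, j) := by
    intro i hi j hj
    rw [hwR, if_pos ⟨hi, hj⟩]
    have := hv0 j i
    split_ifs <;> linarith
  have htW : ∀ i ∈ N1, v i (t i) ≤ W := by
    intro i hi
    refine (hrev i hi _ (Or.inl rfl)).trans ?_
    have h := hmatch {s(i, t i)} (by
      intro e he
      rw [Finset.mem_singleton] at he
      subst he
      exact hG i hi _ (ht i hi).1 (ht i hi).2.1.symm)
      (by
        intro e he f hf hef
        rw [Finset.mem_singleton] at he hf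
        exact absurd (he.trans hf.symm) hef) (by simpa using hm1)
    simpa using h
  have hAsum : ∑ i ∈ N1, v i (A i) ≤ 9 * k * s * W := by
    have hconf : ∀ i ∈ N1, (N1.filter
        (fun j => ∃ x, x ∈ s(i, A i) ∧ x ∈ s(j, A j))).card ≤ 2 * s + 1 := by
      intro i hi
      have hc : ∀ j, (N1.filter (fun l => A l = j)).card ≤ s := by
        intro j
        have := hA1 j
        rwa [← Finset.coe_filter, Set.ncard_coe_finset] at this
      -- The index `i` itself lies in the second fibre, which saves one.
      have hsub : N1.filter (fun j => ∃ x, x ∈ s(i, A i) ∧ x ∈ s(j, A j)) ⊆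
          (N1.filter (fun l => A l = i) ∪ N1.filter (fun l => A l = A i)) ∪ {A i} := by
        intro j hj
        obtain ⟨hj1, x, hx1, hx2⟩ := Finset.mem_filter.1 hj
        rw [Sym2.mem_iff] at hx1 hx2
        simp only [Finset.mem_union, Finset.mem_filter, Finset.mem_singleton]
        grind
      refine (Finset.card_le_card hsub).trans ((Finset.card_union_le _ _).trans ?_)
      have h1 := Finset.card_union_le (N1.filter (fun l => A l = i))
        (N1.filter (fun l => A l = A i))
      have h2 := hc i
      have h3 := hc (A i)
      rw [Finset.card_singleton]
      omega
    obtain ⟨M, c, hMS, hMc, hMi, hc0, -, hmc, hsum⟩ := exists_greedy_independent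
      (fun i j : Fin n => ∃ x, x ∈ s(i, A i) ∧ x ∈ s(j, A j))
      (fun i j ⟨x, h1, h2⟩ => ⟨x, h2, h1⟩) (fun i => ⟨i, by simp, by simp⟩)
      (fun i => v i (A i)) (fun i => hv0 _ _) (2 * s + 1) (n / (3 * k)) N1
      (∑ i, v i (A i)) hconf (Finset.sum_nonneg fun i _ => hv0 _ _)
      (fun i _ => Finset.single_le_sum (f := fun i => v i (A i)) (fun i _ => hv0 _ _)
        (Finset.mem_univ i))
    have hMW : ∑ i ∈ M, v i (A i) ≤ W := by
      have hinj : Set.InjOn (fun i => s(i, A i)) (M : Set (Fin n)) := by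
        intro i hi j hj hij
        by_contra hne
        refine hMi i hi j hj hne ⟨i, by simp, ?_⟩
        have hij' : s(i, A i) = s(j, A j) := hij
        rw [← hij']
        simp
      have h := hmatch (M.image (fun i => s(i, A i)))
        (by
          intro e he
          obtain ⟨i, hi, rfl⟩ := Finset.mem_image.1 he
          have hi := hMS hi
          exact hG i hi _ (hA i hi).1 (hA i hi).2.symm)
        (by
          intro e he f hf hef x hx hx'
          obtain ⟨i, hi, rfl⟩ := Finset.mem_image.1 he
          obtain ⟨j, hj, rfl⟩ := Finset.mem_image.1 hf
          exact hMi i hi j hj (fun h => hef (by rw [h])) ⟨x, hx, hx'⟩)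
        (Finset.card_image_le.trans hMc)
      rw [Finset.sum_image hinj] at h
      exact (Finset.sum_le_sum fun i hi => hrev i (hMS hi) _ (Or.inr rfl)).trans h
    have hnm : n ≤ 6 * k * (n / (3 * k)) := by
      have h1 := Nat.lt_mul_div_succ n (show 0 < 3 * k by omega)
      nlinarith [Nat.mul_le_mul_left (3 * k) hm1]
    have hnc : (N1.card : ℝ) * c ≤ 6 * k * W := by
      have hcard : N1.card ≤ 6 * k * (n / (3 * k)) :=
        ((Finset.card_le_univ N1).trans (by simp)).trans hnm
      have hcard' : (N1.card : ℝ) ≤ 6 * k * ((n / (3 * k) : ℕ) : ℝ) := by exact_mod_cast hcard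
      calc (N1.card : ℝ) * c ≤ (6 * k * ((n / (3 * k) : ℕ) : ℝ)) * c :=
            mul_le_mul_of_nonneg_right hcard' hc0
        _ = 6 * k * (((n / (3 * k) : ℕ) : ℝ) * c) := by ring
        _ ≤ 6 * k * W := mul_le_mul_of_nonneg_left (hmc.trans hMW) (by positivity)
    have hDW : ((2 * s + 1 : ℕ) : ℝ) * ∑ i ∈ M, v i (A i) ≤ ((2 * s + 1 : ℕ) : ℝ) * W :=
      mul_le_mul_of_nonneg_left hMW (by positivity)
    have hcoef : 2 * s + 1 + 6 * k ≤ 9 * k * s := by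
      nlinarith [Nat.mul_le_mul_left k hs1, Nat.mul_le_mul_right s hk]
    have hcoef' : (((2 * s + 1 : ℕ) : ℝ) + 6 * k) * W ≤ 9 * k * s * W :=
      mul_le_mul_of_nonneg_right (by exact_mod_cast hcoef) hW0
    linarith
  have hdeg : ∀ x, (X.filter (fun e => x ∈ e)).card ≤ k := by
    intro x
    have := hFdeg X hX x
    rwa [← Finset.coe_filter, Set.ncard_coe_finset] at this
  have hXdiag : ∀ e ∈ X, ¬ e.IsDiag := fun e he => G.not_isDiag_of_mem_edgeSet (hFsub X hX e he)
  set E : Finset (Fin n × Fin n) :=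
    Finset.univ.filter (fun p => p.1 ∈ N1 ∧ p.2 ∈ N2 ∧ s(p.1, p.2) ∈ X) with hE
  have hS := hA2 E (by intro p hp; rw [hE, Finset.mem_filter] at hp; exact ⟨hp.2.1, hp.2.2.1⟩)
    (by
      intro i
      refine (Finset.card_le_card_of_injOn (fun p : Fin n × Fin n => s(p.1, p.2)) ?_ ?_).trans
        (hdeg i)
      · rintro ⟨a, b⟩ hp
        simp only [hE, Finset.coe_filter, Finset.mem_filter, Finset.mem_univ, true_and,
          Set.mem_ofPred_eq] at hp ⊢
        exact ⟨hp.1.2.2, by simp [hp.2]⟩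
      · rintro ⟨a, b⟩ hp ⟨a', b'⟩ hp' h
        simp only [Finset.coe_filter, Set.mem_ofPred_eq] at hp hp'
        obtain rfl : a = i := hp.2
        obtain rfl : a' = a := hp'.2
        exact congrArg (Prod.mk _) (Sym2.congr_right.1 h))
    (by
      intro j
      refine (Finset.card_le_card_of_injOn (fun p : Fin n × Fin n => s(p.1, p.2)) ?_ ?_).trans
        (hdeg j)
      · rintro ⟨a, b⟩ hp
        simp only [hE, Finset.coe_filter, Finset.mem_filter, Finset.mem_univ, true_and,
          Set.mem_ofPred_eq] at hp ⊢
        exact ⟨hp.1.2.2, by simp [hp.2]⟩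
      · rintro ⟨a, b⟩ hp ⟨a', b'⟩ hp' h
        simp only [Finset.coe_filter, Set.mem_ofPred_eq] at hp hp'
        obtain rfl : b = j := hp.2
        obtain rfl : b' = b := hp'.2
        exact congrArg (fun x => (x, _)) (Sym2.congr_left.1 h))
  rw [← Finset.coe_filter, Set.ncard_coe_finset] at hS
  set B : Finset (Fin n) := N1.filter (fun i => ∃ j, (i, j) ∈ E ∧ v i (A i) < v i j) with hB
  have hrow : ∀ i, ∑ j ∈ Finset.univ.filter (fun j => s(i, j) ∈ X), v i j ≤
      (if i ∈ N1 then k * v i (A i) else 0) + (if i ∈ B then k * W else 0) := by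
    intro i
    by_cases hi : i ∈ N1
    · have hcard : (Finset.univ.filter (fun j => s(i, j) ∈ X)).card ≤ k := by
        refine (Finset.card_le_card_of_injOn (fun j => s(i, j)) ?_ ?_).trans (hdeg i)
        · intro j hj
          simpa using hj
        · intro j _ j' _ h
          exact Sym2.congr_right.1 h
      have hbound : ∀ j ∈ Finset.univ.filter (fun j => s(i, j) ∈ X),
          v i j ≤ v i (A i) + (if i ∈ B then W else 0) := by
        intro j hj
        have hjX : s(i, j) ∈ X := (Finset.mem_filter.1 hj).2
        have hA0 := hv0 i (A i)
        by_cases hj2 : j ∈ N2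
        · by_cases hlt : v i (A i) < v i j
          · have hiB : i ∈ B := Finset.mem_filter.2
              ⟨hi, j, Finset.mem_filter.2 ⟨Finset.mem_univ _, hi, hj2, hjX⟩, hlt⟩
            rw [if_pos hiB]
            have hne : j ≠ i := fun h => hXdiag _ hjX (by simp [h])
            have h1 := (ht i hi).2.2 j hj2 hne
            have h2 := htW i hi
            linarith
          · split_ifs <;> linarith
        · rw [hvz i j (fun h => hj2 h.2)]
          split_ifs <;> linarith
      have h := Finset.sum_le_card_nsmul _ _ _ hbound
      rw [nsmul_eq_mul] at h
      have hk' : ((Finset.univ.filter (fun j => s(i, j) ∈ X)).card : ℝ) ≤ k := by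
        exact_mod_cast hcard
      have hA0 := hv0 i (A i)
      refine h.trans ((mul_le_mul_of_nonneg_right hk' (by split_ifs <;> linarith)).trans ?_)
      rw [if_pos hi]
      split_ifs <;> linarith
    · have hiB : i ∉ B := fun h => hi (Finset.mem_filter.1 h).1
      rw [if_neg hi, if_neg hiB,
        Finset.sum_eq_zero fun j _ => hvz i j (fun h => hi h.1)]
      simp
  have hmain : ∑ e ∈ X, w e ≤ k * ∑ i ∈ N1, v i (A i) + B.card * (k * W) := by
    refine (sum_edges_le_sum_pairs X hXdiag v hv0 w hw).trans
      ((Finset.sum_le_sum fun i _ => hrow i).trans (le_of_eq ?_))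
    rw [Finset.sum_add_distrib, Finset.sum_ite_mem, Finset.sum_ite_mem]
    simp [Finset.mul_sum]
  have h1 : (k : ℝ) * ∑ i ∈ N1, v i (A i) ≤ k * (9 * k * s * W) :=
    mul_le_mul_of_nonneg_left hAsum (by positivity)
  have h2 : (B.card : ℝ) * (k * W) ≤ (k * s) * (k * W) :=
    mul_le_mul_of_nonneg_right (by exact_mod_cast hS) (by positivity)
  calc ∑ e ∈ X, w e ≤ 10 * (k : ℝ) ^ 2 * s * W := by linarith
    _ ≤ (1 + 10 * (k : ℝ) ^ 2 * s) * W := by linarith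
end

section
/- Let k ≥ 1 and let G be a graph on n vertices with n ≥ 3k, with nonnegative edge weights w: E(G) → ℝ≥0. Let F be a family of subgraphs of G such that every matching of G with at most ⌊n/(3k)⌋ edges is contained in some member of F. Then for every matching M of G there exists H ∈ F with Σ_{e∈E(H)} w(e) ≥ (1/(3k)) · Σ_{e∈M} w(e). -/
/-!
A matching `M` on `n` vertices has at most `n / 2` edges. With `q = ⌊n / (3k)⌋ ≥ 1` one has
`n < 3k(q + 1) ≤ 6kq`, so `M` has at most `3k · q` edges. Hence `M` splits into at most `3k`
submatchings with at most `q` edges each, and one of them carries at least the fraction `1 / (3k)`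
of the weight of `M` (`exists_small_subset_sum_ge`). By the extension property this submatching
lies in some `H ∈ F`, and since weights are nonnegative, `H` is at least as heavy.
-/

/-- Pigeonhole: a set of at most `c * q` elements can be cut into `c` pieces with at most `q`
elements each, so one of the pieces carries at least `1 / c` of the total weight. -/
lemma exists_small_subset_sum_ge {α : Type*} [DecidableEq α] (w : α → ℝ) (q c : ℕ)
    (S : Finset α) (hS : S.card ≤ c * q) :
    ∃ T ⊆ S, T.card ≤ q ∧ ∑ e ∈ S, w e ≤ c * ∑ e ∈ T, w e := by
  induction c generalizing S with
  | zero =>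
    have hS0 : S = ∅ := by simpa using hS
    subst hS0
    exact ⟨∅, by simp⟩
  | succ c ih =>
    -- Split off one piece `A` of size `min q |S|`; the answer is `A` or the best piece of `S \ A`.
    obtain ⟨A, hAS, hA⟩ := Finset.exists_subset_card_eq (min_le_right q S.card)
    have hcard := Finset.card_sdiff_add_card_eq_card hAS
    have hle : (S \ A).card ≤ c * q := by
      rw [add_mul, one_mul] at hS
      omega
    obtain ⟨T, hTS, hT, hsum⟩ := ih (S \ A) hle
    have hsplit := Finset.sum_sdiff (f := w) hAS
    have hc : (0 : ℝ) ≤ c := Nat.cast_nonneg c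
    rcases le_total (∑ e ∈ A, w e) (∑ e ∈ T, w e) with h | h
    · refine ⟨T, hTS.trans Finset.sdiff_subset, hT, ?_⟩
      push_cast
      linarith
    · refine ⟨A, hAS, by omega, ?_⟩
      have := mul_le_mul_of_nonneg_left h hc
      push_cast
      linarith

/-- A matching on `n` vertices has at most `n / 2` edges, as its edges cover disjoint pairs of
vertices. -/
lemma two_mul_card_matching_le {n : ℕ} (G : SimpleGraph (Fin n)) (M : Finset (Sym2 (Fin n)))
    (hM : ∀ e ∈ M, e ∈ G.edgeSet)
    (hdisj : ∀ e ∈ M, ∀ f ∈ M, e ≠ f → ∀ x : Fin n, x ∈ e → x ∉ f) :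
    2 * M.card ≤ n := by
  have hcard : (M.biUnion Sym2.toFinset).card = ∑ e ∈ M, e.toFinset.card := by
    refine Finset.card_biUnion fun e he f hf hef => ?_
    rw [Function.onFun, Finset.disjoint_left]
    intro x hxe hxf
    exact hdisj e he f hf hef x (Sym2.mem_toFinset.1 hxe) (Sym2.mem_toFinset.1 hxf)
  have htwo : ∑ e ∈ M, e.toFinset.card = ∑ _e ∈ M, 2 :=
    Finset.sum_congr rfl fun e he =>
      Sym2.card_toFinset_of_not_isDiag e (G.not_isDiag_of_mem_edgeSet (hM e he))
  have hle := Finset.card_le_univ (M.biUnion Sym2.toFinset)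
  rw [hcard, htwo, Finset.sum_const, smul_eq_mul, Fintype.card_fin] at hle
  omega


/-- If every matching of G with at most ⌊n/(3k)⌋ edges extends to a
member of the family F, then for every matching M of G some member of F has weight
at least w(M)/(3k). -/
theorem matching_outweighed_by_family
    (k n : ℕ) (hk : 1 ≤ k) (hn : 3 * k ≤ n)
    (G : SimpleGraph (Fin n))
    (w : Sym2 (Fin n) → ℝ) (hw : ∀ e, 0 ≤ w e)
    (F : Set (Finset (Sym2 (Fin n))))
    (hFsub : ∀ H ∈ F, ∀ e ∈ H, e ∈ G.edgeSet)
    (hFext : ∀ M : Finset (Sym2 (Fin n)),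
      (∀ e ∈ M, e ∈ G.edgeSet) →
      (∀ e ∈ M, ∀ f ∈ M, e ≠ f → ∀ x : Fin n, x ∈ e → x ∉ f) →
      M.card ≤ n / (3 * k) → ∃ H ∈ F, M ⊆ H) :
    ∀ M : Finset (Sym2 (Fin n)),
      (∀ e ∈ M, e ∈ G.edgeSet) →
      (∀ e ∈ M, ∀ f ∈ M, e ≠ f → ∀ x : Fin n, x ∈ e → x ∉ f) →
      ∃ H ∈ F, (1 / (3 * (k : ℝ))) * ∑ e ∈ M, w e ≤ ∑ e ∈ H, w e := by
  intro M hM hdisj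
  have hcard : M.card ≤ 3 * k * (n / (3 * k)) := by
    have h2 := two_mul_card_matching_le G M hM hdisj
    have hdiv := Nat.div_add_mod n (3 * k)
    have hmod := Nat.mod_lt n (show 0 < 3 * k by omega)
    have hq : 3 * k * 1 ≤ 3 * k * (n / (3 * k)) :=
      Nat.mul_le_mul_left _ (Nat.div_pos hn (by omega))
    omega
  obtain ⟨T, hTM, hT, hsum⟩ := exists_small_subset_sum_ge w _ _ M hcard
  obtain ⟨H, hHF, hTH⟩ := hFext T (fun e he => hM e (hTM he))
    (fun e he f hf => hdisj e (hTM he) f (hTM hf)) hT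
  refine ⟨H, hHF, le_trans ?_ (Finset.sum_le_sum_of_subset_of_nonneg hTH fun e _ _ => hw e)⟩
  have hk' : (0 : ℝ) < 3 * k := by positivity
  push_cast at hsum
  rwa [one_div, inv_mul_le_iff₀ hk']
end

section
/- Let k ≥ 1 and let G be a graph on n vertices with n ≥ 3k, with nonnegative edge weights w: E(G) → ℝ≥0. Let F be a family of subgraphs of G such that every matching of G with at most ⌊n/(3k)⌋ edges is contained in some member of F. If H is a subgraph of G in which every vertex has degree at most 2, then Σ_{e∈E(H)} w(e) ≤ 9k · max_{H'∈F} Σ_{e∈E(H')} w(e). -/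
/-!
The proof passes from `H` to a matching and from the matching to a small matching.

* An edge of a graph of maximum degree at most 2 meets at most 3 edges, itself included. Choosing
  edges greedily, heaviest first, and discarding those that meet the chosen one therefore yields a
  matching `M ⊆ H` with `w(H) ≤ 3 w(M)` (`exists_matching_third`).
* With `t = ⌊n/(3k)⌋ ≥ 1`, a matching of `G` has at most `n/2 ≤ 3kt` edges, so it splits into `3k`
  parts of at most `t` edges each, and the heaviest part `M'` satisfies `w(M) ≤ 3k w(M')`
  (`exists_small_subset`). A member of `F` containing `M'` is the one sought.
-/

/-- The edges of `H` that meet an edge `e ∈ H` number at most 3, as `e` itself is counted at both of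
its ends. -/
lemma card_meeting_le_three {V : Type*} [Fintype V] [DecidableEq V] (H : Finset (Sym2 V))
    (hdeg : ∀ x : V, (H.filter (fun e => x ∈ e)).card ≤ 2) (e : Sym2 V) (he : e ∈ H) :
    (H.filter (fun f => ∃ x, x ∈ e ∧ x ∈ f)).card ≤ 3 := by
  induction e using Sym2.ind with
  | _ x y =>
    have hN : H.filter (fun f => ∃ z, z ∈ s(x, y) ∧ z ∈ f)
        = H.filter (fun f => x ∈ f) ∪ H.filter (fun f => y ∈ f) := by
      ext f
      simp only [Finset.mem_filter, Finset.mem_union, Sym2.mem_iff]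
      constructor
      · rintro ⟨hf, z, rfl | rfl, hz⟩ <;> tauto
      · rintro (⟨hf, h⟩ | ⟨hf, h⟩)
        · exact ⟨hf, x, Or.inl rfl, h⟩
        · exact ⟨hf, y, Or.inr rfl, h⟩
    have hpos : 0 < (H.filter (fun f => x ∈ f) ∩ H.filter (fun f => y ∈ f)).card :=
      Finset.card_pos.mpr ⟨s(x, y), by simp [he]⟩
    have hcard := Finset.card_union_add_card_inter
      (H.filter (fun f => x ∈ f)) (H.filter (fun f => y ∈ f))
    have hx := hdeg x
    have hy := hdeg y
    rw [hN]
    omega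

/-- Greedy choice, by induction on the number of edges: take a heaviest edge, discard the at most 3
edges that meet it, and continue with the rest. -/
lemma exists_matching_third {V : Type*} [Fintype V] [DecidableEq V] (w : Sym2 V → ℝ) (hw : ∀ e, 0 ≤ w e)
    (m : ℕ) : ∀ H : Finset (Sym2 V), H.card ≤ m →
      (∀ x : V, (H.filter (fun e => x ∈ e)).card ≤ 2) →
      ∃ M ⊆ H, (∀ e ∈ M, ∀ f ∈ M, e ≠ f → ∀ x : V, x ∈ e → x ∉ f) ∧
        ∑ e ∈ H, w e ≤ 3 * ∑ e ∈ M, w e := by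
  induction m with
  | zero =>
    intro H hH _
    have hH0 : H = ∅ := Finset.card_eq_zero.mp (by omega)
    exact ⟨∅, by simp, by simp, by simp [hH0]⟩
  | succ m ih =>
    intro H hH hdeg
    rcases H.eq_empty_or_nonempty with rfl | hne
    · exact ⟨∅, by simp, by simp, by simp⟩
    obtain ⟨e, he, hmax⟩ := Finset.exists_max_image H w hne
    set N := H.filter (fun f => ∃ x, x ∈ e ∧ x ∈ f) with hN
    have heN : e ∈ N := by
      induction e using Sym2.ind with
      | _ x y => exact Finset.mem_filter.mpr ⟨he, x, by simp, by simp⟩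
    have hNH : N ⊆ H := Finset.filter_subset _ _
    have hlt : (H \ N).card < H.card :=
      Finset.card_lt_card (Finset.sdiff_ssubset hNH ⟨e, heN⟩)
    obtain ⟨M, hMH, hM, hMw⟩ := ih (H \ N) (by omega) fun x =>
      (Finset.card_le_card (Finset.filter_subset_filter _ Finset.sdiff_subset)).trans (hdeg x)
    have hfar : ∀ f ∈ M, ∀ x, x ∈ e → x ∉ f := by
      intro f hf x hxe hxf
      have h := Finset.mem_sdiff.mp (hMH hf)
      exact h.2 (Finset.mem_filter.mpr ⟨h.1, x, hxe, hxf⟩)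
    have heM : e ∉ M := fun h => (Finset.mem_sdiff.mp (hMH h)).2 heN
    refine ⟨insert e M, ?_, ?_, ?_⟩
    · exact Finset.insert_subset he (hMH.trans Finset.sdiff_subset)
    · intro f hf g hg hfg x hxf hxg
      rcases Finset.mem_insert.mp hf with rfl | hf' <;>
        rcases Finset.mem_insert.mp hg with rfl | hg'
      · exact hfg rfl
      · exact hfar g hg' x hxf hxg
      · exact hfar f hf' x hxg hxf
      · exact hM f hf' g hg' hfg x hxf hxg
    · have hNw : ∑ f ∈ N, w f ≤ 3 * w e := by
        have h1 := Finset.sum_le_card_nsmul N w (w e) fun f hf => hmax f (hNH hf)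
        have h2 : (N.card : ℝ) ≤ 3 := by
          exact_mod_cast card_meeting_le_three H hdeg e he
        rw [nsmul_eq_mul] at h1
        exact h1.trans (mul_le_mul_of_nonneg_right h2 (hw e))
      rw [Finset.sum_insert heM, ← Finset.sum_sdiff hNH]
      linarith

/-- A set of at most `c * t` elements splits into `c` parts of at most `t` elements, and the
heaviest part carries at least a `1/c` fraction of the weight. -/
lemma exists_small_subset {α : Type*} [DecidableEq α] (w : α → ℝ) (t c : ℕ) :
    ∀ M : Finset α, M.card ≤ c * t →
      ∃ M' ⊆ M, M'.card ≤ t ∧ ∑ e ∈ M, w e ≤ c * ∑ e ∈ M', w e := by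
  induction c with
  | zero =>
    intro M hM
    have hM0 : M = ∅ := Finset.card_eq_zero.mp (by omega)
    exact ⟨∅, by simp, by simp, by simp [hM0]⟩
  | succ c ih =>
    intro M hM
    rw [Nat.succ_mul] at hM
    obtain ⟨A, hAM, hA⟩ := Finset.exists_subset_card_eq (min_le_right t M.card)
    have hrest : (M \ A).card ≤ c * t := by
      rw [Finset.card_sdiff_of_subset hAM]
      omega
    obtain ⟨B, hBM, hB, hBw⟩ := ih (M \ A) hrest
    have hsum := Finset.sum_sdiff (f := w) hAM
    have hc : (0 : ℝ) ≤ c := Nat.cast_nonneg c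
    rcases le_total (∑ e ∈ A, w e) (∑ e ∈ B, w e) with h | h
    · refine ⟨B, hBM.trans Finset.sdiff_subset, hB, ?_⟩
      push_cast
      linarith
    · refine ⟨A, hAM, by omega, ?_⟩
      have := mul_le_mul_of_nonneg_left h hc
      push_cast
      linarith

lemma two_mul_card_matching_le_s8 {V : Type*} [Fintype V] [DecidableEq V] (M : Finset (Sym2 V))
    (hdiag : ∀ e ∈ M, ¬ e.IsDiag)
    (hM : ∀ e ∈ M, ∀ f ∈ M, e ≠ f → ∀ x : V, x ∈ e → x ∉ f) :
    2 * M.card ≤ Fintype.card V := by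
  have hdisj : (M : Set (Sym2 V)).PairwiseDisjoint Sym2.toFinset := by
    intro e he f hf hef
    refine Finset.disjoint_left.mpr fun x hx hx' => ?_
    exact hM e he f hf hef x (Sym2.mem_toFinset.mp hx) (Sym2.mem_toFinset.mp hx')
  have hcard := Finset.card_biUnion hdisj
  rw [Finset.sum_congr rfl fun e he => Sym2.card_toFinset_of_not_isDiag e (hdiag e he),
    Finset.sum_const, smul_eq_mul] at hcard
  have := Finset.card_le_univ (M.biUnion Sym2.toFinset)
  omega


/-- If every matching of G with at most ⌊n/(3k)⌋ edges extends to a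
member of F, then every subgraph H of G of maximum degree at most 2 satisfies
w(H) ≤ 9k · max_{H'∈F} w(H'). -/
theorem degree_two_subgraph_outweighed_by_family
    (k n : ℕ) (hk : 1 ≤ k) (hn : 3 * k ≤ n)
    (G : SimpleGraph (Fin n))
    (w : Sym2 (Fin n) → ℝ) (hw : ∀ e, 0 ≤ w e)
    (F : Set (Finset (Sym2 (Fin n))))
    (hFsub : ∀ H' ∈ F, ∀ e ∈ H', e ∈ G.edgeSet)
    (hFext : ∀ M : Finset (Sym2 (Fin n)),
      (∀ e ∈ M, e ∈ G.edgeSet) →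
      (∀ e ∈ M, ∀ f ∈ M, e ≠ f → ∀ x : Fin n, x ∈ e → x ∉ f) →
      M.card ≤ n / (3 * k) → ∃ H' ∈ F, M ⊆ H')
    (H : Finset (Sym2 (Fin n)))
    (hHsub : ∀ e ∈ H, e ∈ G.edgeSet)
    (hHdeg : ∀ x : Fin n, ({e | e ∈ H ∧ x ∈ e} : Set (Sym2 (Fin n))).ncard ≤ 2) :
    ∃ H' ∈ F, ∑ e ∈ H, w e ≤ 9 * (k : ℝ) * ∑ e ∈ H', w e := by
  have hdeg : ∀ x : Fin n, (H.filter (fun e => x ∈ e)).card ≤ 2 := by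
    intro x
    rw [← Set.ncard_coe_finset, Finset.coe_filter]
    exact hHdeg x
  obtain ⟨M, hMH, hM, hMw⟩ := exists_matching_third w hw H.card H le_rfl hdeg
  have hsize := two_mul_card_matching_le_s8 M
    (fun e he => G.not_isDiag_of_mem_edgeSet (hHsub e (hMH he))) hM
  rw [Fintype.card_fin] at hsize
  -- With `t = n / (3 * k)`, `n < 3 * k * (t + 1) ≤ 2 * (3 * k * t)` because `1 ≤ t`.
  have hbound : M.card ≤ 3 * k * (n / (3 * k)) := by
    have h1 : 1 ≤ n / (3 * k) := (Nat.one_le_div_iff (by omega)).mpr hn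
    have h2 := Nat.lt_mul_div_succ n (show 0 < 3 * k by omega)
    have h3 := Nat.mul_le_mul_left (3 * k) h1
    rw [Nat.mul_add] at h2
    omega
  obtain ⟨M', hM'M, hM'card, hM'w⟩ := exists_small_subset w _ _ M hbound
  obtain ⟨H', hH'F, hM'H'⟩ := hFext M' (fun e he => hHsub e (hMH (hM'M he)))
    (fun e he f hf => hM e (hM'M he) f (hM'M hf)) hM'card
  refine ⟨H', hH'F, ?_⟩
  have hmono : ∑ e ∈ M', w e ≤ ∑ e ∈ H', w e :=
    Finset.sum_le_sum_of_subset_of_nonneg hM'H' fun e _ _ => hw e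
  push_cast at hM'w
  calc ∑ e ∈ H, w e ≤ 3 * (3 * (k : ℝ) * ∑ e ∈ M', w e) := by linarith
    _ = 9 * (k : ℝ) * ∑ e ∈ M', w e := by ring
    _ ≤ 9 * (k : ℝ) * ∑ e ∈ H', w e := by gcongr
end

section
/- Let v: N × A → ℝ≥0 be nonnegative values of a set N of n agents over a set A of m alternatives. For each agent i fix an alternative t_i with v(i, t_i) = max_{j∈A} v(i,j). Let B ⊆ A be a nonempty set with |B| ≤ √m such that for every alternative j ∈ A, the number of agents i with v(i,j) > max_{b∈B} v(i,b) is at most √m; and for each agent i fix b_i ∈ B with v(i, b_i) = max_{b∈B} v(i,b). Define revealed values r(i,j) = v(i,j) if j = t_i or j = b_i, and r(i,j) = 0 otherwise, and for an alternative j let SW_R(j) = Σ_i r(i,j). If y is an alternative maximizing SW_R, then for every alternative x, Σ_i v(i,x) ≤ (1 + 2√m) · SW_R(y). In particular, since Σ_i v(i,y) ≥ SW_R(y), the SC-TwoQueries mechanism has distortion O(√m) on instances that admit a sufficiently representative set of alternatives. -/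
/-! Let `M` be the maximum revealed welfare and fix an alternative `x`. An agent who does not
strictly prefer `x` to her favorite in `B` has value at most `r i (b i)` for `x`; summed over
these agents, this is at most the total revealed welfare of the alternatives in `B`, hence at most
`|B| * M ≤ √m * M`. Each of the at most `√m` remaining agents has value at most
`r i (t i) ≤ SW_R(t i) ≤ M` for `x`. So the welfare of `x` is in fact at most `2 * √m * M`. -/

/-- Distortion guarantee of SC-TwoQueries in general social choice.
Given favorite alternatives t_i, a sufficiently representative set B of
alternatives with per-agent favorites b_i in B, and revealed values r, any
alternative y maximizing the revealed welfare satisfies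
SW(x) ≤ (1 + 2√m)·SW_R(y) for every alternative x. -/
theorem sc_two_queries_distortion
    (n m : ℕ)
    (v : Fin n → Fin m → ℝ) (hv : ∀ i j, 0 ≤ v i j)
    (t : Fin n → Fin m) (ht : ∀ i j, v i j ≤ v i (t i))
    (B : Finset (Fin m)) (hBne : B.Nonempty)
    (hBcard : (B.card : ℝ) ≤ Real.sqrt m)
    (b : Fin n → Fin m) (hb1 : ∀ i, b i ∈ B)
    (hb2 : ∀ i, ∀ j ∈ B, v i j ≤ v i (b i))
    (hrep : ∀ j : Fin m,
      (({i | v i (b i) < v i j} : Set (Fin n)).ncard : ℝ) ≤ Real.sqrt m)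
    (r : Fin n → Fin m → ℝ)
    (hr : ∀ i j, r i j = if j = t i ∨ j = b i then v i j else 0)
    (y : Fin m) (hy : ∀ j : Fin m, ∑ i, r i j ≤ ∑ i, r i y) :
    ∀ x : Fin m, ∑ i, v i x ≤ (1 + 2 * Real.sqrt m) * ∑ i, r i y := by
  classical
  intro x
  set M : ℝ := ∑ i, r i y with hM
  have hr0 : ∀ i j, 0 ≤ r i j := by
    intro i j
    rw [hr]
    split_ifs
    exacts [hv i j, le_rfl]
  have hM0 : 0 ≤ M := Finset.sum_nonneg fun i _ => hr0 i y
  have hpoint : ∀ i, v i x ≤ ∑ j ∈ B, r i j + if v i (b i) < v i x then M else 0 := by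
    intro i
    have hB0 : 0 ≤ ∑ j ∈ B, r i j := Finset.sum_nonneg fun j _ => hr0 i j
    split_ifs with h
    · have h1 : r i (t i) = v i (t i) := by simp [hr]
      have h2 : r i (t i) ≤ ∑ k, r k (t i) :=
        Finset.single_le_sum (f := fun k => r k (t i)) (fun k _ => hr0 k _) (Finset.mem_univ i)
      linarith [ht i x, hy (t i)]
    · have h1 : r i (b i) = v i (b i) := by simp [hr]
      have h2 : r i (b i) ≤ ∑ j ∈ B, r i j :=
        Finset.single_le_sum (f := fun j => r i j) (fun j _ => hr0 i j) (hb1 i)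
      linarith
  have hBsum : ∑ i, ∑ j ∈ B, r i j ≤ Real.sqrt m * M := by
    rw [Finset.sum_comm]
    calc ∑ j ∈ B, ∑ i, r i j ≤ ∑ _j ∈ B, M := Finset.sum_le_sum fun j _ => hy j
      _ = B.card * M := by simp
      _ ≤ Real.sqrt m * M := mul_le_mul_of_nonneg_right hBcard hM0
  have hSsum : (∑ i, if v i (b i) < v i x then M else 0) ≤ Real.sqrt m * M := by
    have hcard : ({i | v i (b i) < v i x} : Set (Fin n)).ncard
        = (Finset.univ.filter fun i => v i (b i) < v i x).card := by
      rw [← Set.ncard_coe_finset]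
      simp
    have h := hrep x
    rw [hcard] at h
    rw [← Finset.sum_filter, Finset.sum_const, nsmul_eq_mul]
    exact mul_le_mul_of_nonneg_right h hM0
  have htotal := Finset.sum_le_sum fun i (_ : i ∈ Finset.univ) => hpoint i
  rw [Finset.sum_add_distrib] at htotal
  linarith
end

section
/- Let A be a set of m ≥ 2 alternatives and let k be an integer with k > √m. Consider n = k·m! agents such that for every strict linear order σ on A there are exactly k agents whose preference order is σ. Then for every subset B ⊆ A with |B| ≤ √m there exists an alternative j ∈ A \ B such that strictly more than √m agents rank j above every alternative of B. Consequently, this instance admits no sufficiently representative set of alternatives. -/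
/-! Since `√m < m`, some alternative `j` lies outside `B`. Some ranking puts `j` first, and the
`k > √m` agents holding that ranking all prefer `j` to every member of `B`. -/

/-- With m ≥ 2 alternatives, an integer k > √m, and k·m! agents such
that each strict linear order (modelled as a ranking permutation, smaller position
means more preferred) is the preference of exactly k agents, no sufficiently
representative set of alternatives exists: for every B with |B| ≤ √m there is an
alternative j ∉ B that strictly more than √m agents rank above all of B. -/
theorem no_sufficiently_representative_set
    (m : ℕ) (hm : 2 ≤ m) (k : ℕ) (hk : Real.sqrt m < k)
    (ι : Type*) [Fintype ι] (hn : Fintype.card ι = k * Nat.factorial m)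
    (pref : ι → Equiv.Perm (Fin m))
    (hcount : ∀ σ : Equiv.Perm (Fin m), ({i | pref i = σ} : Set ι).ncard = k) :
    ∀ B : Finset (Fin m), (B.card : ℝ) ≤ Real.sqrt m →
      ∃ j ∉ B, Real.sqrt m <
        (({i | ∀ a ∈ B, pref i j < pref i a} : Set ι).ncard : ℝ) := by
  intro B hB
  have hm' : (2 : ℝ) ≤ m := by exact_mod_cast hm
  have hlt : Real.sqrt m < m := by
    rw [Real.sqrt_lt' (by linarith)]
    nlinarith
  have hBm : B.card < Fintype.card (Fin m) := by
    rw [Fintype.card_fin]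
    exact_mod_cast hB.trans_lt hlt
  obtain ⟨j, hj⟩ : ∃ j, j ∉ B := by
    by_contra! h
    exact hBm.ne ((Finset.card_eq_iff_eq_univ B).2 (Finset.eq_univ_iff_forall.2 h))
  refine ⟨j, hj, ?_⟩
  haveI : NeZero m := ⟨by omega⟩
  -- All `k` agents whose ranking is this transposition place `j` first.
  have hsub : {i | pref i = Equiv.swap j 0} ⊆ {i | ∀ a ∈ B, pref i j < pref i a} := by
    intro i hi a ha
    have hi' : pref i = Equiv.swap j 0 := hi
    have h0 : pref i j = 0 := by rw [hi', Equiv.swap_apply_left]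
    have hne : pref i a ≠ 0 := by
      intro h
      exact hj ((pref i).injective (h.trans h0.symm) ▸ ha)
    rw [h0]
    exact Fin.pos_iff_ne_zero.2 hne
  have hcard := Set.ncard_le_ncard hsub (Set.toFinite _)
  rw [hcount] at hcard
  exact hk.trans_le (by exact_mod_cast hcard)
end

section
/- Let k ≥ 2 and let n be a positive integer divisible by k. For every matching M on a vertex set V of size n with |M| ≤ ⌊n/(3(k−1))⌋ edges, there exists a partition of V into n/k blocks each of size k such that every edge of M has both of its endpoints in the same block. In other words, in the complete graph K_n, the family of spanning unions of disjoint k-cliques is a matching extending (k−1)-family. -/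
/-!
Since `k ≤ 3 (k - 1)` for `k ≥ 2`, the bound on the size of the matching gives `|M| ≤ n / k`, the
number of blocks, so each block need accommodate only one edge. The blocks are cut off one at a
time (`exists_partition_of_matching`): if `q + 1` blocks are to be made and at most `q + 1` edges
remain, the other at most `q` edges cover at most `2 q ≤ k q` of the `k (q + 1)` vertices, so there
is a block of size `k` that contains a chosen edge and avoids all others (`exists_block`).
-/

/-- A block of size `k` can be cut out of `s` so that at most `q` edges `M'` of `M` remain, all of
them untouched by the block, while every other edge lies inside the block. -/
theorem exists_block {V : Type*} [DecidableEq V] {k : ℕ} (hk : 2 ≤ k) (q : ℕ) (s : Finset V)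
    (M : Finset (Sym2 V)) (hs : s.card = (q + 1) * k) (hM : ∀ e ∈ M, ∀ x ∈ e, x ∈ s)
    (hdisj : ∀ e ∈ M, ∀ f ∈ M, e ≠ f → ∀ x : V, x ∈ e → x ∉ f) (hcard : M.card ≤ q + 1) :
    ∃ b ⊆ s, b.card = k ∧ ∃ M' ⊆ M, M'.card ≤ q ∧ (∀ e ∈ M', ∀ x ∈ e, x ∉ b) ∧
      ∀ e ∈ M, e ∈ M' ∨ ∀ x ∈ e, x ∈ b := by
  have card_le (e : Sym2 V) : e.toFinset.card ≤ 2 := by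
    rw [Sym2.card_toFinset]; split_ifs <;> omega
  have hqk : (q + 1) * k = q * k + k := by ring
  rcases M.eq_empty_or_nonempty with rfl | ⟨e₀, he₀⟩
  · obtain ⟨b, hb, hbk⟩ := Finset.exists_subset_card_eq (s := s) (n := k) (by omega)
    exact ⟨b, hb, hbk, ∅, by simp⟩
  · set M' := M.erase e₀ with hM'
    have hM'q : M'.card ≤ q := by rw [hM', Finset.card_erase_of_mem he₀]; omega
    set U := M'.biUnion Sym2.toFinset with hU
    have hUcard : U.card ≤ q * k :=
      (Finset.card_biUnion_le_card_mul _ _ 2 fun e _ => card_le e).trans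
        (Nat.mul_le_mul hM'q hk)
    have hsub : e₀.toFinset ⊆ s \ U := by
      intro x hx
      rw [Sym2.mem_toFinset] at hx
      simp only [hU, Finset.mem_sdiff, Finset.mem_biUnion, Sym2.mem_toFinset, not_exists, not_and]
      refine ⟨hM _ he₀ x hx, fun e he => ?_⟩
      exact hdisj _ he₀ e (Finset.mem_of_mem_erase he) (Finset.ne_of_mem_erase he).symm x hx
    have hk_le : k ≤ (s \ U).card := by
      have := Finset.le_card_sdiff U s
      omega
    obtain ⟨b, hb₁, hb₂, hbk⟩ :=
      Finset.exists_subsuperset_card_eq hsub ((card_le e₀).trans hk) hk_le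
    refine ⟨b, hb₂.trans Finset.sdiff_subset, hbk, M', Finset.erase_subset _ _, hM'q, ?_, ?_⟩
    · intro e he x hx hxb
      exact (Finset.mem_sdiff.1 (hb₂ hxb)).2
        (Finset.mem_biUnion.2 ⟨e, he, Sym2.mem_toFinset.2 hx⟩)
    · intro e he
      by_cases h : e = e₀
      · subst h
        exact Or.inr fun x hx => hb₁ (Sym2.mem_toFinset.2 hx)
      · exact Or.inl (Finset.mem_erase.2 ⟨h, he⟩)

/-- At most `q` pairwise disjoint edges inside a set of `q * k` vertices extend to a partition of
that set into `q` blocks of size `k`. -/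
theorem exists_partition_of_matching {V : Type*} [DecidableEq V] {k : ℕ} (hk : 2 ≤ k) (q : ℕ) :
    ∀ (s : Finset V) (M : Finset (Sym2 V)), s.card = q * k → (∀ e ∈ M, ∀ x ∈ e, x ∈ s) →
    (∀ e ∈ M, ∀ f ∈ M, e ≠ f → ∀ x : V, x ∈ e → x ∉ f) → M.card ≤ q →
    ∃ P : Finpartition s, P.parts.card = q ∧ (∀ b ∈ P.parts, b.card = k) ∧
      ∀ e ∈ M, ∃ b ∈ P.parts, ∀ x ∈ e, x ∈ b := by
  induction q with
  | zero =>
    intro s M hs _ _ hcard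
    obtain rfl : s = ∅ := by simpa using hs
    obtain rfl : M = ∅ := by simpa using hcard
    exact ⟨Finpartition.empty _, by simp [Finpartition.empty]⟩
  | succ q ih =>
    intro s M hs hM hdisj hcard
    obtain ⟨b, hbs, hbk, M', hM', hM'q, hav, hin⟩ := exists_block hk q s M hs hM hdisj hcard
    have hcard' : (s \ b).card = q * k := by
      rw [Finset.card_sdiff_of_subset hbs, hs, hbk, Nat.add_mul, one_mul, Nat.add_sub_cancel]
    obtain ⟨P, hPq, hPk, hPM⟩ := ih (s \ b) M' hcard'
      (fun e he x hx => Finset.mem_sdiff.2 ⟨hM e (hM' he) x hx, hav e he x hx⟩)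
      (fun e he f hf => hdisj e (hM' he) f (hM' hf)) hM'q
    have hb0 : b ≠ ⊥ := by
      rintro rfl
      simp at hbk
      omega
    have hdis : Disjoint (s \ b) b := Finset.sdiff_disjoint
    have hsup : (s \ b) ⊔ b = s := Finset.sdiff_union_of_subset hbs
    refine ⟨P.extend hb0 hdis hsup, ?_, ?_, ?_⟩
    · rw [Finpartition.card_extend, hPq]
    · intro c hc
      rcases Finset.mem_insert.1 hc with rfl | hc
      · exact hbk
      · exact hPk c hc
    · intro e he
      rcases hin e he with h | h
      · obtain ⟨c, hc, hce⟩ := hPM e h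
        exact ⟨c, Finset.mem_insert_of_mem hc, hce⟩
      · exact ⟨b, Finset.mem_insert_self _ _, h⟩


/-- For k ≥ 2 and n divisible by k, every matching on an n-element
vertex set with at most ⌊n/(3(k−1))⌋ edges extends to a partition of the vertex
set into n/k blocks of size k with every matched edge inside a block; i.e., the
spanning unions of disjoint k-cliques form a matching extending (k−1)-family. -/
theorem clique_packing_matching_extending
    (k : ℕ) (hk : 2 ≤ k)
    (V : Type*) [Fintype V] [DecidableEq V]
    (n : ℕ) (hn : Fintype.card V = n) (hn0 : 0 < n) (hdvd : k ∣ n)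
    (M : Finset (Sym2 V))
    (hloop : ∀ e ∈ M, ¬ e.IsDiag)
    (hdisj : ∀ e ∈ M, ∀ f ∈ M, e ≠ f → ∀ x : V, x ∈ e → x ∉ f)
    (hcard : M.card ≤ n / (3 * (k - 1))) :
    ∃ P : Finpartition (Finset.univ : Finset V),
      P.parts.card = n / k ∧
      (∀ b ∈ P.parts, b.card = k) ∧
      (∀ e ∈ M, ∃ b ∈ P.parts, ∀ x ∈ e, x ∈ b) := by
  have hle : M.card ≤ n / k := hcard.trans (Nat.div_le_div_left (by omega) (by omega))
  exact exists_partition_of_matching hk (n / k) Finset.univ M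
    (by rw [Finset.card_univ, hn, Nat.div_mul_cancel hdvd]) (fun _ _ x _ => Finset.mem_univ x)
    hdisj hle
end
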